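/- Lower bound for the Hausdorff dimension: Let (Λ,f) be a strongly mixing C¹ conformal repeller with scale constants δ_f, λ₀, λ₁ as in (C2') and (C3'), and let s_crit be the unique zero of the pressure P(s). For every 0≤s<s_crit there is a constant c(s)>0 such that every countable cover of Λ by open sets U_α of diameter less than δ_f satisfies Σ_α (diam U_α)^s ≥ c(s). Consequently the s-dimensional Hausdorff measure of Λ is positive for every s<s_crit, and dimH Λ ≥ s_crit. -/

import Mathlib

open Filter Topology Metric Set MeasureTheory
open scoped Classical ENNReal

noncomputable section

/-- `Df` is the conformal derivative of `f`. -/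
def IsConfDeriv {Λ : Type*} [MetricSpace Λ] (f : Λ → Λ) (Df : Λ → ℝ) : Prop :=
  ∀ x : Λ, Filter.Tendsto (fun p : Λ × Λ => dist (f p.1) (f p.2) / dist p.1 p.2)
    ((𝓝 x ×ˢ 𝓝 x) ⊓ 𝓟 {p : Λ × Λ | p.1 ≠ p.2}) (𝓝 (Df x))

/-- `Df^{(n)}_x`, the conformal derivative along the orbit. -/
def orbDeriv {Λ : Type*} [MetricSpace Λ] (f : Λ → Λ) (Df : Λ → ℝ) (n : ℕ) (x : Λ) : ℝ :=
  ∏ k ∈ Finset.range n, Df (f^[k] x)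

/-- (C2): uniform expansion. -/
def UnifExpanding {Λ : Type*} [MetricSpace Λ] (f : Λ → Λ) (Df : Λ → ℝ) : Prop :=
  ∃ C : ℝ, 0 < C ∧ ∃ β : ℝ, 1 < β ∧ ∀ (x : Λ) (n : ℕ), C * β ^ n ≤ orbDeriv f Df n x

/-- `M_n(s) = sup_y (L_sⁿ 1)(y)`. -/
def Mn {Λ : Type*} [MetricSpace Λ] (f : Λ → Λ) (Df : Λ → ℝ) (s : ℝ) (n : ℕ) : ℝ :=
  ⨆ y : Λ, ∑' x : ↥(f^[n] ⁻¹' {y}), orbDeriv f Df n (x : Λ) ^ (-s)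

/-- `m_n(s) = inf_y (L_sⁿ 1)(y)`. -/
def mn {Λ : Type*} [MetricSpace Λ] (f : Λ → Λ) (Df : Λ → ℝ) (s : ℝ) (n : ℕ) : ℝ :=
  ⨅ y : Λ, ∑' x : ↥(f^[n] ⁻¹' {y}), orbDeriv f Df n (x : Λ) ^ (-s)

/-!
Fix `0 ≤ s < t` with `P̄(t) ≥ 0` and a factor `q > 1` close to `1`. By compactness there is a scale
`δ` below which `f` expands distances from `u` by a factor between `q⁻¹ Df_u` and `q Df_u`. Iterate
a nontrivial set `U` until its image first has two points at distance at least `δ`, say at time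
`k`: then `f^k` is injective on `U`, and `δ ≤ 2 (q Df)^{(k)}_u diam U` for every `u ∈ U`. So `U`
contributes at most `(2/δ)^s (diam U)^s M_{n-k}` to `L_sⁿ 1`, the transfer operator being taken
with derivative `q Df`. Uniform expansion and `P̄(t) ≥ 0` make the corresponding `M_n` unbounded,
so for a finite subcover one may choose `n` beyond all the times `k` with `M_j ≤ M_n` for every
`j ≤ n`; summing over the cover and dividing by `M_n` gives `1 ≤ (2/δ)^s Σ (diam U)^s`. The factor
`q` replaces a bounded distortion estimate, which a `C¹` map need not satisfy.
-/

section OrbitDerivative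

variable {Λ : Type*} [MetricSpace Λ] {f : Λ → Λ} {Df : Λ → ℝ}

lemma orbDeriv_add (f : Λ → Λ) (Df : Λ → ℝ) (k m : ℕ) (x : Λ) :
    orbDeriv f Df (k + m) x = orbDeriv f Df k x * orbDeriv f Df m (f^[k] x) := by
  simp only [orbDeriv, Finset.prod_range_add, ← Function.iterate_add_apply, add_comm]

lemma orbDeriv_succ (f : Λ → Λ) (Df : Λ → ℝ) (n : ℕ) (x : Λ) :
    orbDeriv f Df (n + 1) x = orbDeriv f Df n x * Df (f^[n] x) :=
  Finset.prod_range_succ _ _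

lemma orbDeriv_pos (hDf : ∀ x, 0 < Df x) (n : ℕ) (x : Λ) : 0 < orbDeriv f Df n x :=
  Finset.prod_pos fun _ _ => hDf _

lemma orbDeriv_const_mul (f : Λ → Λ) (Df : Λ → ℝ) (r : ℝ) (n : ℕ) (x : Λ) :
    orbDeriv f (fun z => r * Df z) n x = r ^ n * orbDeriv f Df n x := by
  simp only [orbDeriv, Finset.prod_mul_distrib, Finset.prod_const, Finset.card_range]

lemma UnifExpanding.exists_pos_le (hexp : UnifExpanding f Df) : ∃ c > 0, ∀ x, c ≤ Df x := by
  obtain ⟨C, hC, β, hβ, h⟩ := hexp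
  exact ⟨C * β, by positivity, fun x => by simpa [orbDeriv] using h x 1⟩

lemma UnifExpanding.pos (hexp : UnifExpanding f Df) (x : Λ) : 0 < Df x := by
  obtain ⟨c, hc, h⟩ := hexp.exists_pos_le
  exact hc.trans_le (h x)

lemma UnifExpanding.tendsto_orbDeriv_atTop (hexp : UnifExpanding f Df) (x : Λ) :
    Tendsto (fun n => orbDeriv f Df n x) atTop atTop := by
  obtain ⟨C, hC, β, hβ, h⟩ := hexp
  exact tendsto_atTop_mono (h x) ((tendsto_pow_atTop_atTop_of_one_lt hβ).const_mul_atTop hC)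

lemma unifExpanding_const_mul {C β r : ℝ} (hC : 0 < C) (hr : 0 < r) (hrβ : 1 < r * β)
    (h : ∀ x n, C * β ^ n ≤ orbDeriv f Df n x) : UnifExpanding f (fun x => r * Df x) := by
  refine ⟨C, hC, r * β, hrβ, fun x n => ?_⟩
  calc C * (r * β) ^ n = r ^ n * (C * β ^ n) := by ring
    _ ≤ r ^ n * orbDeriv f Df n x := by gcongr; exact h x n
    _ = orbDeriv f (fun x => r * Df x) n x := (orbDeriv_const_mul f Df r n x).symm

end OrbitDerivative

section ConformalDerivative

variable {Λ : Type*} [MetricSpace Λ] {f : Λ → Λ} {Df : Λ → ℝ}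

lemma neBot_nhds_prod_nhds_inf_ne {x : Λ} (hx : (𝓝[≠] x).NeBot) :
    ((𝓝 x ×ˢ 𝓝 x) ⊓ 𝓟 {p : Λ × Λ | p.1 ≠ p.2}).NeBot := by
  have hpair : Tendsto (fun u : Λ => (u, x)) (𝓝[≠] x)
      ((𝓝 x ×ˢ 𝓝 x) ⊓ 𝓟 {p : Λ × Λ | p.1 ≠ p.2}) :=
    tendsto_inf.2 ⟨(tendsto_id.mono_left nhdsWithin_le_nhds).prodMk tendsto_const_nhds,
      tendsto_principal.2 self_mem_nhdsWithin⟩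
  exact hpair.neBot

lemma IsConfDeriv.continuous (hpt : ∀ x : Λ, (𝓝[≠] x).NeBot) (hconf : IsConfDeriv f Df) :
    Continuous Df := by
  refine continuous_iff_continuousAt.2 fun x => ?_
  refine Metric.nhds_basis_closedBall.tendsto_right_iff.2 fun ε hε => ?_
  have hnear := (hconf x).eventually (closedBall_mem_nhds _ hε)
  rw [eventually_inf_principal, ← nhds_prod_eq] at hnear
  have hdiag : Tendsto (fun u : Λ => (u, u)) (𝓝 x) (𝓝 (x, x)) :=
    tendsto_id.prodMk_nhds tendsto_id
  filter_upwards [hdiag.eventually (eventually_eventually_nhds.2 hnear)] with u hu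
  have := neBot_nhds_prod_nhds_inf_ne (hpt u)
  refine isClosed_closedBall.mem_of_tendsto (hconf u) ?_
  rwa [eventually_inf_principal, ← nhds_prod_eq]

lemma IsConfDeriv.exists_dist_bounds [CompactSpace Λ] (hpt : ∀ x : Λ, (𝓝[≠] x).NeBot)
    (hconf : IsConfDeriv f Df) (hDf : ∀ x, 0 < Df x) {q : ℝ} (hq : 1 < q) :
    ∃ δ > 0, ∀ u v : Λ, dist u v < δ →
      q⁻¹ * Df u * dist u v ≤ dist (f u) (f v) ∧ dist (f u) (f v) ≤ q * Df u * dist u v := by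
  have hratio (x : Λ) : ∀ᶠ p : Λ × Λ in 𝓝 (x, x), p.1 ≠ p.2 →
      dist (f p.1) (f p.2) / dist p.1 p.2 / Df p.1 ∈ Ioo q⁻¹ q := by
    have hDf_fst : Tendsto (fun p : Λ × Λ => Df p.1)
        ((𝓝 x ×ˢ 𝓝 x) ⊓ 𝓟 {p : Λ × Λ | p.1 ≠ p.2}) (𝓝 (Df x)) :=
      ((hconf.continuous hpt).tendsto x).comp (tendsto_fst.mono_left inf_le_left)
    have hlim := (hconf x).div hDf_fst (hDf x).ne'
    rw [div_self (hDf x).ne'] at hlim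
    rw [nhds_prod_eq]
    exact eventually_inf_principal.1
      (hlim.eventually (Ioo_mem_nhds (inv_lt_one_of_one_lt₀ hq) hq))
  have hunif : ∀ᶠ p : Λ × Λ in uniformity Λ, p.1 ≠ p.2 →
      dist (f p.1) (f p.2) / dist p.1 p.2 / Df p.1 ∈ Ioo q⁻¹ q := by
    rw [compactSpace_uniformity, eventually_iSup]
    exact hratio
  obtain ⟨δ, hδ, h⟩ := Metric.mem_uniformity_dist.1 hunif
  refine ⟨δ, hδ, fun u v huv => ?_⟩
  rcases eq_or_ne u v with rfl | hne
  · simp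
  have hdist := dist_pos.2 hne
  obtain ⟨hlower, hupper⟩ := h huv hne
  rw [div_div, lt_div_iff₀ (mul_pos hdist (hDf u))] at hlower
  rw [div_div, div_lt_iff₀ (mul_pos hdist (hDf u))] at hupper
  constructor <;> linarith

end ConformalDerivative

section ScaleBounds

variable {Λ : Type*} [MetricSpace Λ] {f : Λ → Λ} {a b : Λ → ℝ} {δ : ℝ}

lemma dist_iterate_le_orbDeriv_mul (hb : ∀ x, 0 < b x)
    (hupper : ∀ u v, dist u v < δ → dist (f u) (f v) ≤ b u * dist u v) {u v : Λ} {n : ℕ}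
    (hclose : ∀ j < n, dist (f^[j] u) (f^[j] v) < δ) :
    dist (f^[n] u) (f^[n] v) ≤ orbDeriv f b n u * dist u v := by
  induction n with
  | zero => simp [orbDeriv]
  | succ n ih =>
    rw [Function.iterate_succ_apply', Function.iterate_succ_apply', orbDeriv_succ]
    calc dist (f (f^[n] u)) (f (f^[n] v))
        ≤ b (f^[n] u) * dist (f^[n] u) (f^[n] v) := hupper _ _ (hclose n n.lt_succ_self)
      _ ≤ b (f^[n] u) * (orbDeriv f b n u * dist u v) :=
          mul_le_mul_of_nonneg_left (ih fun j hj => hclose j (hj.trans n.lt_succ_self)) (hb _).le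
      _ = orbDeriv f b n u * b (f^[n] u) * dist u v := by ring

lemma orbDeriv_mul_le_dist_iterate (ha : ∀ x, 0 < a x)
    (hlower : ∀ u v, dist u v < δ → a u * dist u v ≤ dist (f u) (f v)) {u v : Λ} {n : ℕ}
    (hclose : ∀ j < n, dist (f^[j] u) (f^[j] v) < δ) :
    orbDeriv f a n u * dist u v ≤ dist (f^[n] u) (f^[n] v) := by
  induction n with
  | zero => simp [orbDeriv]
  | succ n ih =>
    rw [Function.iterate_succ_apply', Function.iterate_succ_apply', orbDeriv_succ]
    calc orbDeriv f a n u * a (f^[n] u) * dist u v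
        = a (f^[n] u) * (orbDeriv f a n u * dist u v) := by ring
      _ ≤ a (f^[n] u) * dist (f^[n] u) (f^[n] v) :=
          mul_le_mul_of_nonneg_left (ih fun j hj => hclose j (hj.trans n.lt_succ_self)) (ha _).le
      _ ≤ dist (f (f^[n] u)) (f (f^[n] v)) := hlower _ _ (hclose n n.lt_succ_self)

lemma eq_of_iterate_eq_of_dist_lt (ha : ∀ x, 0 < a x)
    (hlower : ∀ u v, dist u v < δ → a u * dist u v ≤ dist (f u) (f v)) {u v : Λ} {n : ℕ}
    (hclose : ∀ j < n, dist (f^[j] u) (f^[j] v) < δ) (heq : f^[n] u = f^[n] v) : u = v := by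
  have h := orbDeriv_mul_le_dist_iterate ha hlower hclose
  rw [heq, dist_self] at h
  exact dist_le_zero.1 (nonpos_of_mul_nonpos_right h (orbDeriv_pos ha n u))

lemma exists_escape_time (hexp : UnifExpanding f a)
    (hlower : ∀ u v, dist u v < δ → a u * dist u v ≤ dist (f u) (f v))
    {U : Set Λ} (hU : U.Nontrivial) :
    ∃ k, (∃ u ∈ U, ∃ v ∈ U, δ ≤ dist (f^[k] u) (f^[k] v)) ∧
      ∀ j < k, ∀ u ∈ U, ∀ v ∈ U, dist (f^[j] u) (f^[j] v) < δ := by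
  have hescape : ∃ k, ∃ u ∈ U, ∃ v ∈ U, δ ≤ dist (f^[k] u) (f^[k] v) := by
    by_contra! hclose
    obtain ⟨u, hu, v, hv, hne⟩ := hU
    obtain ⟨n, hn⟩ := ((hexp.tendsto_orbDeriv_atTop u).atTop_mul_const
      (dist_pos.2 hne)).eventually_ge_atTop δ |>.exists
    have hgrow := orbDeriv_mul_le_dist_iterate hexp.pos hlower
      fun j (_ : j < n) => hclose j u hu v hv
    exact (hclose n u hu v hv).not_ge (hn.trans hgrow)
  exact ⟨Nat.find hescape, Nat.find_spec hescape, fun j hj => by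
    simpa only [not_exists, not_and, not_le] using Nat.find_min hescape hj⟩

lemma le_two_mul_orbDeriv_mul_diam (hb : ∀ x, 0 < b x)
    (hupper : ∀ u v, dist u v < δ → dist (f u) (f v) ≤ b u * dist u v)
    {U : Set Λ} (hU : Bornology.IsBounded U) {k : ℕ}
    (hescape : ∃ u ∈ U, ∃ v ∈ U, δ ≤ dist (f^[k] u) (f^[k] v))
    (hclose : ∀ j < k, ∀ u ∈ U, ∀ v ∈ U, dist (f^[j] u) (f^[j] v) < δ) {x : Λ} (hx : x ∈ U) :
    δ ≤ 2 * orbDeriv f b k x * diam U := by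
  obtain ⟨u, hu, v, hv, huv⟩ := hescape
  have hdist {w : Λ} (hw : w ∈ U) :
      dist (f^[k] x) (f^[k] w) ≤ orbDeriv f b k x * diam U :=
    (dist_iterate_le_orbDeriv_mul hb hupper fun j hj => hclose j hj x hx w hw).trans
      (mul_le_mul_of_nonneg_left (dist_le_diam_of_mem hU hx hw) (orbDeriv_pos hb k x).le)
  linarith [hdist hu, hdist hv, dist_triangle_left (f^[k] u) (f^[k] v) (f^[k] x)]

end ScaleBounds

section TransferSums

variable {Λ : Type*} [MetricSpace Λ] {f : Λ → Λ} {D : Λ → ℝ} {s : ℝ}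

/-- The weight `(D^{(n)}_x)^{-s}` carried by `x` in the `n`-th iterate of the transfer operator
with derivative `D`, valued in `[0, ∞]` so that sums over fibres need no summability. -/
def orbWeight (f : Λ → Λ) (D : Λ → ℝ) (s : ℝ) (n : ℕ) (x : Λ) : ℝ≥0∞ :=
  ENNReal.ofReal (orbDeriv f D n x ^ (-s))

/-- `(L_sⁿ 1_A)(y)`: the `n`-th iterate of the transfer operator applied to the indicator function
of `A`. -/
def transferOn (f : Λ → Λ) (D : Λ → ℝ) (s : ℝ) (A : Set Λ) (n : ℕ) (y : Λ) : ℝ≥0∞ :=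
  ∑' x : ↥(A ∩ f^[n] ⁻¹' {y}), orbWeight f D s n x

/-- `M_n(s) = sup_y (L_sⁿ 1)(y)` as an extended nonnegative real; `Mn` is its real-valued form,
which takes a junk value when the supremum is infinite. -/
def transferSup (f : Λ → Λ) (D : Λ → ℝ) (s : ℝ) (n : ℕ) : ℝ≥0∞ :=
  ⨆ y, transferOn f D s univ n y

lemma orbWeight_add (hD : ∀ x, 0 < D x) (k m : ℕ) (x : Λ) :
    orbWeight f D s (k + m) x = orbWeight f D s k x * orbWeight f D s m (f^[k] x) := by
  have hnonneg (n : ℕ) (z : Λ) := (orbDeriv_pos (f := f) hD n z).le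
  rw [orbWeight, orbWeight, orbWeight, orbDeriv_add, Real.mul_rpow (hnonneg _ _) (hnonneg _ _),
    ENNReal.ofReal_mul (Real.rpow_nonneg (hnonneg _ _) _)]

lemma transferOn_univ_le_sum {ι : Type*} (t : Finset ι) {U : ι → Set Λ}
    (hU : univ ⊆ ⋃ i ∈ t, U i) (n : ℕ) (y : Λ) :
    transferOn f D s univ n y ≤ ∑ i ∈ t, transferOn f D s (U i) n y := by
  refine le_trans (ENNReal.tsum_mono_subtype (orbWeight f D s n) ?_)
    (ENNReal.tsum_biUnion_le (orbWeight f D s n) t fun i => U i ∩ f^[n] ⁻¹' {y})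
  rw [← iUnion₂_inter]
  exact inter_subset_inter_left _ hU

lemma transferOn_add_le (hD : ∀ x, 0 < D x) {U : Set Λ} {k : ℕ} (hinj : InjOn f^[k] U)
    {B : ℝ≥0∞} (hB : ∀ u ∈ U, orbWeight f D s k u ≤ B) (m : ℕ) (y : Λ) :
    transferOn f D s U (k + m) y ≤ B * transferSup f D s m := by
  have hmaps (x : ↥(U ∩ f^[k + m] ⁻¹' {y})) : f^[k] x ∈ univ ∩ f^[m] ⁻¹' {y} := by
    refine ⟨mem_univ _, ?_⟩
    rw [mem_preimage, ← Function.iterate_add_apply, add_comm]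
    exact x.2.2
  let push (x : ↥(U ∩ f^[k + m] ⁻¹' {y})) : ↥(univ ∩ f^[m] ⁻¹' {y}) := ⟨f^[k] x, hmaps x⟩
  have hpush : Function.Injective push := fun x z hxz =>
    Subtype.ext (hinj x.2.1 z.2.1 (congrArg Subtype.val hxz))
  calc transferOn f D s U (k + m) y
      ≤ ∑' x : ↥(U ∩ f^[k + m] ⁻¹' {y}), B * orbWeight f D s m (push x) := by
        refine ENNReal.tsum_le_tsum fun x => ?_
        rw [orbWeight_add hD]
        gcongr
        exact hB x x.2.1
    _ = B * ∑' x : ↥(U ∩ f^[k + m] ⁻¹' {y}), orbWeight f D s m (push x) := ENNReal.tsum_mul_left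
    _ ≤ B * transferOn f D s univ m y := by
        gcongr
        exact ENNReal.tsum_comp_le_tsum_of_injective hpush fun z => orbWeight f D s m z
    _ ≤ B * transferSup f D s m := by
        gcongr
        exact le_iSup (transferOn f D s univ m) y

lemma transferSup_ne_top [CompactSpace Λ] (hexp : UnifExpanding f D) (hs : 0 ≤ s) {δ : ℝ}
    (hδ : 0 < δ) (hinj : ∀ u v, dist u v < δ → f u = f v → u = v) (n : ℕ) :
    transferSup f D s n ≠ ⊤ := by
  induction n with
  | zero =>
    refine ne_top_of_le_ne_top ENNReal.one_ne_top (iSup_le fun y => ?_)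
    simp [transferOn, orbWeight, orbDeriv]
  | succ n ih =>
    obtain ⟨c, hc, hcD⟩ := hexp.exists_pos_le
    obtain ⟨t, -, ht⟩ := isCompact_univ.elim_nhds_subcover (fun x : Λ => ball x (δ / 2))
      fun x _ => ball_mem_nhds x (half_pos hδ)
    have hinjOn (x : Λ) : InjOn f^[1] (ball x (δ / 2)) := fun u hu v hv huv =>
      hinj u v ((dist_triangle_right u v x).trans_lt
        (by linarith [mem_ball.1 hu, mem_ball.1 hv])) huv
    have hweight (u : Λ) : orbWeight f D s 1 u ≤ ENNReal.ofReal (c ^ (-s)) := by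
      refine ENNReal.ofReal_le_ofReal (Real.rpow_le_rpow_of_nonpos hc ?_ (neg_nonpos.2 hs))
      simpa [orbDeriv] using hcD u
    refine ne_top_of_le_ne_top ?_ (iSup_le fun y => (transferOn_univ_le_sum t ht _ y).trans
      (Finset.sum_le_sum fun x _ => add_comm 1 n ▸
        transferOn_add_le hexp.pos (hinjOn x) (fun u _ => hweight u) n y))
    exact ENNReal.sum_ne_top.2 fun _ _ => ENNReal.mul_ne_top ENNReal.ofReal_ne_top ih

lemma Mn_eq_toReal_transferSup (hD : ∀ x, 0 < D x) {n : ℕ} (hfin : transferSup f D s n ≠ ⊤) :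
    Mn f D s n = (transferSup f D s n).toReal := by
  have hfin_at (y : Λ) : transferOn f D s univ n y ≠ ⊤ :=
    ne_top_of_le_ne_top hfin (le_iSup (transferOn f D s univ n) y)
  rw [transferSup, ENNReal.toReal_iSup hfin_at, Mn]
  congr 1 with y
  rw [transferOn, univ_inter]
  refine Eq.trans (tsum_congr fun x => ?_)
    (ENNReal.tsum_toReal_eq (f := fun x : ↥(f^[n] ⁻¹' {y}) => orbWeight f D s n x)
      fun _ => ENNReal.ofReal_ne_top).symm
  exact (ENNReal.toReal_ofReal (Real.rpow_nonneg (orbDeriv_pos hD n x).le _)).symm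

lemma transferSup_pos [Nonempty Λ] (hD : ∀ x, 0 < D x) (n : ℕ) : 0 < transferSup f D s n := by
  obtain ⟨x⟩ := ‹Nonempty Λ›
  calc 0 < orbWeight f D s n x :=
        ENNReal.ofReal_pos.2 (Real.rpow_pos_of_pos (orbDeriv_pos hD n x) _)
    _ ≤ transferOn f D s univ n (f^[n] x) :=
        ENNReal.le_tsum (f := fun z : ↥(univ ∩ f^[n] ⁻¹' {f^[n] x}) => orbWeight f D s n z)
          ⟨x, mem_univ x, rfl⟩
    _ ≤ transferSup f D s n := le_iSup (transferOn f D s univ n) _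

end TransferSums

section Covers

variable {Λ : Type*} [MetricSpace Λ] {f : Λ → Λ} {a b : Λ → ℝ} {δ s : ℝ}

lemma exists_record_of_iSup_eq_top {u : ℕ → ℝ≥0∞} (hfin : ∀ n, u n ≠ ⊤) (htop : ⨆ n, u n = ⊤)
    (N : ℕ) : ∃ n ≥ N, u n ≠ 0 ∧ ∀ k ≤ n, u k ≤ u n := by
  have hexceed : ∃ n, ∑ j ∈ Finset.range N, u j < u n :=
    iSup_eq_top.1 htop _ (ENNReal.sum_lt_top.2 fun j _ => (hfin j).lt_top)
  have hspec := Nat.find_spec hexceed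
  refine ⟨Nat.find hexceed, not_lt.1 fun hlt => ?_, hspec.ne_bot, fun k hk => ?_⟩
  · exact hspec.not_ge (Finset.single_le_sum_of_canonicallyOrdered (Finset.mem_range.2 hlt))
  · rcases hk.eq_or_lt with rfl | hk
    · rfl
    · exact (not_lt.1 (Nat.find_min hexceed hk)).trans hspec.le

lemma exists_injOn_iterate_orbWeight_le (hexp : UnifExpanding f a) (hb : ∀ x, 0 < b x)
    (hδ : 0 < δ) (hlower : ∀ u v, dist u v < δ → a u * dist u v ≤ dist (f u) (f v))
    (hupper : ∀ u v, dist u v < δ → dist (f u) (f v) ≤ b u * dist u v) (hs : 0 ≤ s)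
    {U : Set Λ} (hU : U.Nontrivial) (hbdd : Bornology.IsBounded U) :
    ∃ k, InjOn f^[k] U ∧
      ∀ u ∈ U, orbWeight f b s k u ≤ ENNReal.ofReal ((2 / δ) ^ s * diam U ^ s) := by
  obtain ⟨k, hescape, hclose⟩ := exists_escape_time hexp hlower hU
  refine ⟨k, fun u hu v hv => eq_of_iterate_eq_of_dist_lt hexp.pos hlower
    fun j hj => hclose j hj u hu v hv, fun u hu => ENNReal.ofReal_le_ofReal ?_⟩
  have hpos := orbDeriv_pos (f := f) hb k u
  have hle := le_two_mul_orbDeriv_mul_diam hb hupper hbdd hescape hclose hu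
  rw [Real.rpow_neg hpos.le, ← Real.inv_rpow hpos.le, ← Real.mul_rpow (by positivity) diam_nonneg]
  refine Real.rpow_le_rpow (by positivity) ?_ hs
  rw [inv_le_iff_one_le_mul₀ hpos, div_mul_eq_mul_div, div_mul_eq_mul_div, one_le_div hδ]
  linarith

lemma one_le_tsum_of_orbWeight_le [CompactSpace Λ] (hb : ∀ x, 0 < b x)
    (hfin : ∀ n, transferSup f b s n ≠ ⊤) (htop : ⨆ n, transferSup f b s n = ⊤)
    {ι : Type*} {U : ι → Set Λ} (hU : ∀ i, IsOpen (U i)) (hcover : univ ⊆ ⋃ i, U i)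
    {k : ι → ℕ} (hinj : ∀ i, InjOn f^[k i] (U i))
    {B : ι → ℝ≥0∞} (hB : ∀ i, ∀ u ∈ U i, orbWeight f b s (k i) u ≤ B i) :
    1 ≤ ∑' i, B i := by
  obtain ⟨t, ht⟩ := isCompact_univ.elim_finite_subcover U hU hcover
  obtain ⟨n, hn, hn0, hrecord⟩ := exists_record_of_iSup_eq_top hfin htop (t.sup k)
  have hpiece (y : Λ) (i : ι) (hi : i ∈ t) :
      transferOn f b s (U i) n y ≤ B i * transferSup f b s n := by
    obtain ⟨m, rfl⟩ := Nat.exists_eq_add_of_le ((Finset.le_sup hi).trans hn)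
    refine (transferOn_add_le hb (hinj i) (hB i) m y).trans ?_
    gcongr
    exact hrecord m (Nat.le_add_left m _)
  have hsum : transferSup f b s n ≤ (∑' i, B i) * transferSup f b s n :=
    iSup_le fun y => calc
      transferOn f b s univ n y ≤ ∑ i ∈ t, transferOn f b s (U i) n y :=
        transferOn_univ_le_sum t ht n y
      _ ≤ ∑ i ∈ t, B i * transferSup f b s n := Finset.sum_le_sum (hpiece y)
      _ = (∑ i ∈ t, B i) * transferSup f b s n := (Finset.sum_mul ..).symm
      _ ≤ (∑' i, B i) * transferSup f b s n := by gcongr; exact ENNReal.sum_le_tsum t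
  exact (ENNReal.mul_le_mul_iff_left hn0 (hfin n)).1 (by rwa [one_mul])

lemma inv_le_tsum_diam_rpow [CompactSpace Λ] (hpt : ∀ x : Λ, (𝓝[≠] x).NeBot)
    (hexp : UnifExpanding f a) (hb : ∀ x, 0 < b x) (hδ : 0 < δ)
    (hlower : ∀ u v, dist u v < δ → a u * dist u v ≤ dist (f u) (f v))
    (hupper : ∀ u v, dist u v < δ → dist (f u) (f v) ≤ b u * dist u v) (hs : 0 ≤ s)
    (hfin : ∀ n, transferSup f b s n ≠ ⊤) (htop : ⨆ n, transferSup f b s n = ⊤)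
    {ι : Type*} {U : ι → Set Λ} (hU : ∀ i, IsOpen (U i)) (hcover : univ ⊆ ⋃ i, U i) :
    ENNReal.ofReal ((2 / δ) ^ s)⁻¹ ≤ ∑' i, ENNReal.ofReal (diam (U i) ^ s) := by
  have hA : 0 < (2 / δ) ^ s := by positivity
  have hk (i : ι) : ∃ k, InjOn f^[k] (U i) ∧ ∀ u ∈ U i,
      orbWeight f b s k u ≤ ENNReal.ofReal ((2 / δ) ^ s * diam (U i) ^ s) := by
    rcases (U i).eq_empty_or_nonempty with hempty | ⟨x, hx⟩
    · exact ⟨0, by simp [hempty]⟩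
    · have := hpt x
      exact exists_injOn_iterate_orbWeight_le hexp hb hδ hlower hupper hs
        (infinite_of_mem_nhds x ((hU i).mem_nhds hx)).nontrivial isBounded_of_compactSpace
  choose k hinj hweight using hk
  have hone := one_le_tsum_of_orbWeight_le hb hfin htop hU hcover hinj hweight
  simp only [ENNReal.ofReal_mul hA.le, ENNReal.tsum_mul_left] at hone
  rwa [ENNReal.ofReal_inv_of_pos hA, ENNReal.inv_le_iff_le_mul (fun _ => by simpa using hA)
    (fun h => absurd h ENNReal.ofReal_ne_top)]

end Covers

section Pressure

variable {Λ : Type*} [MetricSpace Λ] {f : Λ → Λ} {Df : Λ → ℝ} {s t : ℝ}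

/-- The upper pressure `P̄(s) = limsup_n (1/n) log M_n(s)`, taken in the extended reals so that
no boundedness of the sequence is presupposed. -/
def upperPressure (f : Λ → Λ) (Df : Λ → ℝ) (s : ℝ) : EReal :=
  limsup (fun n : ℕ => (((n : ℝ)⁻¹ * Real.log (Mn f Df s n) : ℝ) : EReal)) atTop

lemma upperPressure_eq_of_tendsto {p : ℝ}
    (h : Tendsto (fun n : ℕ => (n : ℝ)⁻¹ * Real.log (Mn f Df s n)) atTop (𝓝 p)) :
    upperPressure f Df s = p :=
  ((continuous_coe_real_ereal.tendsto p).comp h).limsup_eq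

lemma frequently_exp_lt_transferSup [Nonempty Λ] (hDf : ∀ x, 0 < Df x)
    (hfin : ∀ n, transferSup f Df t n ≠ ⊤) (ht : 0 ≤ upperPressure f Df t) {ε : ℝ} (hε : 0 < ε) :
    ∃ᶠ n : ℕ in atTop, ENNReal.ofReal (Real.exp (-(ε * n))) < transferSup f Df t n := by
  have hlt : ((-ε : ℝ) : EReal) < upperPressure f Df t :=
    lt_of_lt_of_le (by exact_mod_cast neg_lt_zero.2 hε) ht
  refine ((frequently_lt_of_lt_limsup (by isBoundedDefault) hlt).and_eventually
    (eventually_gt_atTop 0)).mono fun n ⟨hn, hn0⟩ => ?_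
  have hn0' : (0 : ℝ) < n := Nat.cast_pos.2 hn0
  rw [EReal.coe_lt_coe_iff, inv_mul_eq_div, lt_div_iff₀ hn0',
    Mn_eq_toReal_transferSup hDf (hfin n),
    Real.lt_log_iff_exp_lt (ENNReal.toReal_pos (transferSup_pos hDf n).ne' (hfin n)),
    neg_mul] at hn
  exact (ENNReal.ofReal_lt_iff_lt_toReal (Real.exp_pos _).le (hfin n)).2 hn

lemma mul_orbWeight_le_orbWeight_const_mul {C β q : ℝ} (hC : 0 < C) (hβ : 0 < β) (hq : 0 < q)
    (hst : s ≤ t) {n : ℕ} {x : Λ} (h : C * β ^ n ≤ orbDeriv f Df n x) :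
    ENNReal.ofReal (C ^ (t - s) * (q ^ (-s) * β ^ (t - s)) ^ n) * orbWeight f Df t n x ≤
      orbWeight f (fun z => q * Df z) s n x := by
  have hpos : 0 < orbDeriv f Df n x := lt_of_lt_of_le (by positivity) h
  rw [orbWeight, orbWeight, orbDeriv_const_mul, ← ENNReal.ofReal_mul (by positivity)]
  refine ENNReal.ofReal_le_ofReal ?_
  calc C ^ (t - s) * (q ^ (-s) * β ^ (t - s)) ^ n * orbDeriv f Df n x ^ (-t)
      = (q ^ n) ^ (-s) * ((C * β ^ n) ^ (t - s) * orbDeriv f Df n x ^ (-t)) := by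
        rw [mul_pow, Real.rpow_pow_comm hq.le, Real.rpow_pow_comm hβ.le,
          Real.mul_rpow hC.le (by positivity)]
        ring
    _ ≤ (q ^ n) ^ (-s) * (orbDeriv f Df n x ^ (t - s) * orbDeriv f Df n x ^ (-t)) := by
        gcongr
    _ = (q ^ n * orbDeriv f Df n x) ^ (-s) := by
        rw [← Real.rpow_add hpos, Real.mul_rpow (by positivity) hpos.le]
        ring_nf

lemma mul_transferSup_le_transferSup_const_mul {C β q : ℝ} (hC : 0 < C) (hβ : 0 < β) (hq : 0 < q)
    (hst : s ≤ t) (h : ∀ x n, C * β ^ n ≤ orbDeriv f Df n x) (n : ℕ) :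
    ENNReal.ofReal (C ^ (t - s) * (q ^ (-s) * β ^ (t - s)) ^ n) * transferSup f Df t n ≤
      transferSup f (fun z => q * Df z) s n := by
  rw [transferSup, ENNReal.mul_iSup]
  refine iSup_mono fun y => ?_
  rw [transferOn, ← ENNReal.tsum_mul_left]
  exact ENNReal.tsum_le_tsum fun x => mul_orbWeight_le_orbWeight_const_mul hC hβ hq hst (h x n)

lemma iSup_transferSup_const_mul_eq_top [Nonempty Λ] {C β q : ℝ} (hC : 0 < C) (hβ : 0 < β)
    (hq : 0 < q) (hst : s ≤ t) (h : ∀ x n, C * β ^ n ≤ orbDeriv f Df n x)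
    (hfin : ∀ n, transferSup f Df t n ≠ ⊤) (ht : 0 ≤ upperPressure f Df t)
    (hgap : 1 < q ^ (-s) * β ^ (t - s)) :
    ⨆ n, transferSup f (fun x => q * Df x) s n = ⊤ := by
  set γ := q ^ (-s) * β ^ (t - s)
  set ε := Real.log γ / 2 with hε_def
  have hγ : Real.exp (2 * ε) = γ := by
    rw [hε_def, mul_div_cancel₀ _ two_ne_zero, Real.exp_log (by positivity)]
  have hε : 0 < ε := half_pos (Real.log_pos hgap)
  have hDf (x : Λ) : 0 < Df x :=
    (mul_pos hC hβ).trans_le (by simpa [orbDeriv] using h x 1)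
  have hgrow : Tendsto (fun n : ℕ => C ^ (t - s) * Real.exp (ε * n)) atTop atTop :=
    (Real.tendsto_exp_atTop.comp
      (tendsto_natCast_atTop_atTop.const_mul_atTop hε)).const_mul_atTop (by positivity)
  refine iSup_eq_top.2 fun K hK => ?_
  obtain ⟨n, hexp_lt, hKn⟩ := ((frequently_exp_lt_transferSup hDf hfin ht hε).and_eventually
    (hgrow.eventually_gt_atTop K.toReal)).exists
  refine ⟨n, ?_⟩
  calc K < ENNReal.ofReal (C ^ (t - s) * Real.exp (ε * n)) :=
        (ENNReal.lt_ofReal_iff_toReal_lt hK.ne).2 hKn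
    _ = ENNReal.ofReal (C ^ (t - s) * γ ^ n) * ENNReal.ofReal (Real.exp (-(ε * n))) := by
        rw [← ENNReal.ofReal_mul (by positivity), ← hγ, ← Real.exp_nat_mul, mul_assoc,
          ← Real.exp_add]
        ring_nf
    _ ≤ ENNReal.ofReal (C ^ (t - s) * γ ^ n) * transferSup f Df t n := by gcongr
    _ ≤ transferSup f (fun x => q * Df x) s n :=
        mul_transferSup_le_transferSup_const_mul hC hβ hq hst h n

lemma exists_one_lt_lt_one_lt_rpow_mul_rpow {β : ℝ} (hβ : 1 < β) (hst : s < t) :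
    ∃ q, 1 < q ∧ q < β ∧ 1 < q ^ (-s) * β ^ (t - s) := by
  have hlim : Tendsto (fun q : ℝ => q ^ (-s) * β ^ (t - s)) (𝓝 1) (𝓝 (β ^ (t - s))) := by
    simpa using (Real.continuousAt_rpow_const 1 (-s) (Or.inl one_ne_zero)).tendsto.mul_const
      (β ^ (t - s))
  have hgap := hlim.eventually_const_lt (Real.one_lt_rpow hβ (sub_pos.2 hst))
  exact ((eventually_mem_nhdsWithin (s := Ioi (1 : ℝ))).and
    (((eventually_lt_nhds hβ).and hgap).filter_mono nhdsWithin_le_nhds)).exists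

end Pressure

section HausdorffMeasure

lemma exists_thickening_ediam_rpow_le {X : Type*} [PseudoEMetricSpace X] (A : Set X) {s : ℝ}
    (hs : 0 ≤ s) {ε : ℝ≥0∞} (hε : 0 < ε) :
    ∃ η > 0, ediam (thickening η A) ^ s ≤ ediam A ^ s + ε := by
  rcases eq_or_ne (ediam A ^ s) ⊤ with htop | htop
  · exact ⟨1, one_pos, by simp [htop]⟩
  have hcont : Continuous fun η : NNReal => (ediam A + 2 * (η : ℝ≥0∞)) ^ s :=
    ENNReal.continuous_rpow_const.comp (continuous_const.add
      ((ENNReal.continuous_const_mul ENNReal.ofNat_ne_top).comp ENNReal.continuous_coe))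
  have hlim := (hcont.tendsto 0).mono_left (nhdsWithin_le_nhds (s := Ioi 0))
  simp only [ENNReal.coe_zero, mul_zero, add_zero] at hlim
  obtain ⟨η, hη, hle⟩ := (eventually_mem_nhdsWithin.and
    (hlim.eventually_le_const (ENNReal.lt_add_right htop hε.ne'))).exists
  exact ⟨η, hη, (ENNReal.rpow_le_rpow (ediam_thickening_le η) hs).trans hle⟩

lemma le_hausdorffMeasure_of_forall_isOpen_cover {X : Type*} [EMetricSpace X] [MeasurableSpace X]
    [BorelSpace X] {A : Set X} {s : ℝ} (hs : 0 < s) {c : ℝ≥0∞}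
    (h : ∀ U : ℕ → Set X, (∀ i, IsOpen (U i)) → A ⊆ ⋃ i, U i → c ≤ ∑' i, ediam (U i) ^ s) :
    c ≤ μH[s] A := by
  rw [Measure.hausdorffMeasure_apply]
  refine le_iSup₂_of_le 1 one_pos (le_iInf₂ fun T hT => le_iInf fun _ => ?_)
  refine ENNReal.le_of_forall_pos_le_add fun ε hε _ => ?_
  obtain ⟨e, he, hesum⟩ := ENNReal.exists_pos_sum_of_countable' (ENNReal.coe_pos.2 hε).ne' ℕ
  choose η hη hthick using fun i => exists_thickening_ediam_rpow_le (T i) hs.le (he i)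
  calc c ≤ ∑' i, ediam (thickening (η i) (T i)) ^ s :=
        h _ (fun _ => isOpen_thickening)
          (hT.trans (iUnion_mono fun i => self_subset_thickening (hη i) _))
    _ ≤ ∑' i, (ediam (T i) ^ s + e i) := ENNReal.tsum_le_tsum hthick
    _ = ∑' i, (⨆ _ : (T i).Nonempty, ediam (T i) ^ s) + ∑' i, e i := by
        rw [ENNReal.tsum_add]
        congr 2 with i
        rcases (T i).eq_empty_or_nonempty with hempty | hne
        · simp [hempty, hs]
        · simp [hne]
    _ ≤ ∑' i, (⨆ _ : (T i).Nonempty, ediam (T i) ^ s) + ε := by gcongr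

lemma ofReal_diam_rpow {X : Type*} [PseudoMetricSpace X] {A : Set X} (hA : Bornology.IsBounded A)
    {s : ℝ} (hs : 0 ≤ s) : ENNReal.ofReal (diam A ^ s) = ediam A ^ s := by
  rw [← ENNReal.ofReal_rpow_of_nonneg diam_nonneg hs, diam, ENNReal.ofReal_toReal hA.ediam_ne_top]

lemma hausdorffMeasure_pos_of_forall_isOpen_cover {X : Type*} [MetricSpace X] [BoundedSpace X]
    [Nonempty X] [MeasurableSpace X] [BorelSpace X] {s c : ℝ} (hs : 0 ≤ s) (hc : 0 < c)
    (h : ∀ U : ℕ → Set X, (∀ i, IsOpen (U i)) → univ ⊆ ⋃ i, U i →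
      ENNReal.ofReal c ≤ ∑' i, ENNReal.ofReal (diam (U i) ^ s)) :
    0 < μH[s] (univ : Set X) := by
  rcases hs.eq_or_lt with rfl | hs
  · obtain ⟨x⟩ := ‹Nonempty X›
    calc 0 < μH[0] {x} := by simp
      _ ≤ μH[0] univ := measure_mono (subset_univ _)
  · refine (ENNReal.ofReal_pos.2 hc).trans_le (le_hausdorffMeasure_of_forall_isOpen_cover hs ?_)
    intro U hU hcover
    simpa only [ofReal_diam_rpow (Bornology.IsBounded.all _) hs.le] using h U hU hcover

lemma ofReal_le_dimH_of_forall_hausdorffMeasure_pos {X : Type*} [EMetricSpace X]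
    [MeasurableSpace X] [BorelSpace X] {A : Set X} {t : ℝ}
    (h : ∀ s, 0 ≤ s → s < t → 0 < μH[s] A) : ENNReal.ofReal t ≤ dimH A := by
  refine ENNReal.le_of_forall_nnreal_lt fun s hs => le_dimH_of_hausdorffMeasure_ne_zero ?_
  exact (h s s.2 ((ENNReal.lt_ofReal_iff_toReal_lt ENNReal.coe_ne_top).1 hs)).ne'

end HausdorffMeasure

section LowerBound

variable {Λ : Type*} [MetricSpace Λ] [CompactSpace Λ] [Nonempty Λ] {f : Λ → Λ} {Df : Λ → ℝ}

theorem exists_pos_le_tsum_diam_rpow_of_lt (hpt : ∀ x : Λ, (𝓝[≠] x).NeBot)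
    (hconf : IsConfDeriv f Df) (hexp : UnifExpanding f Df) {s t : ℝ}
    (ht : 0 ≤ upperPressure f Df t) (hs : 0 ≤ s) (hst : s < t) :
    ∃ c : ℝ, 0 < c ∧ ∀ U : ℕ → Set Λ, (∀ i, IsOpen (U i)) → univ ⊆ ⋃ i, U i →
      ENNReal.ofReal c ≤ ∑' i, ENNReal.ofReal (diam (U i) ^ s) := by
  have ⟨C, hC, β, hβ, hgrow⟩ := hexp
  have hβ0 : 0 < β := one_pos.trans hβ
  obtain ⟨q, hq, hqβ, hgap⟩ := exists_one_lt_lt_one_lt_rpow_mul_rpow hβ hst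
  have hq0 : 0 < q := one_pos.trans hq
  have hexp_lower : UnifExpanding f fun x => q⁻¹ * Df x :=
    unifExpanding_const_mul hC (inv_pos.2 hq0) (by rwa [inv_mul_eq_div, one_lt_div hq0]) hgrow
  have hexp_upper : UnifExpanding f fun x => q * Df x :=
    unifExpanding_const_mul hC hq0 (one_lt_mul_of_lt_of_le hq hβ.le) hgrow
  obtain ⟨δ, hδ, hbounds⟩ := hconf.exists_dist_bounds hpt hexp.pos hq
  have hinj (u v : Λ) (huv : dist u v < δ) : f u = f v → u = v :=
    eq_of_iterate_eq_of_dist_lt (n := 1) hexp_lower.pos (fun u v h => (hbounds u v h).1)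
      (by simpa using huv)
  have htop : ⨆ n, transferSup f (fun x => q * Df x) s n = ⊤ :=
    iSup_transferSup_const_mul_eq_top hC hβ0 hq0 hst.le hgrow
      (transferSup_ne_top hexp (hs.trans hst.le) hδ hinj) ht hgap
  exact ⟨((2 / δ) ^ s)⁻¹, by positivity, fun U hU hcover =>
    inv_le_tsum_diam_rpow hpt hexp_lower hexp_upper.pos hδ (fun u v h => (hbounds u v h).1)
      (fun u v h => (hbounds u v h).2) hs (transferSup_ne_top hexp_upper hs hδ hinj) htop hU hcover⟩

theorem hausdorff_lower_bound_general [MeasurableSpace Λ] [BorelSpace Λ]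
    (hpt : ∀ x : Λ, (𝓝[≠] x).NeBot) (hconf : IsConfDeriv f Df) (hexp : UnifExpanding f Df)
    {t : ℝ} (ht : 0 ≤ upperPressure f Df t) :
    (∀ s : ℝ, 0 ≤ s → s < t → ∃ c : ℝ, 0 < c ∧
      ∀ U : ℕ → Set Λ, (∀ i, IsOpen (U i)) → univ ⊆ ⋃ i, U i →
        ENNReal.ofReal c ≤ ∑' i, ENNReal.ofReal (diam (U i) ^ s)) ∧
    (∀ s : ℝ, 0 ≤ s → s < t → 0 < μH[s] (univ : Set Λ)) ∧
    ENNReal.ofReal t ≤ dimH (univ : Set Λ) := by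
  have hcover (s : ℝ) (hs : 0 ≤ s) (hst : s < t) :=
    exists_pos_le_tsum_diam_rpow_of_lt hpt hconf hexp ht hs hst
  have hmeasure (s : ℝ) (hs : 0 ≤ s) (hst : s < t) : 0 < μH[s] (univ : Set Λ) := by
    obtain ⟨c, hc, h⟩ := hcover s hs hst
    exact hausdorffMeasure_pos_of_forall_isOpen_cover hs hc h
  exact ⟨hcover, hmeasure, ofReal_le_dimH_of_forall_hausdorffMeasure_pos hmeasure⟩

end LowerBound

/-- **Lower bound for the Hausdorff dimension.** For `0 ≤ s < s_crit` every countable open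
cover of `Λ` by sets of diameter `< δ_f` has `Σ (diam U_α)^s` bounded below by a positive
constant; hence `H^s(Λ) > 0` for `s < s_crit` and `dimH Λ ≥ s_crit`. -/
theorem hausdorff_lower_bound {Λ : Type*} [MetricSpace Λ] [CompactSpace Λ] [Nonempty Λ]
    [MeasurableSpace Λ] [BorelSpace Λ]
    (hpt : ∀ x : Λ, (𝓝[≠] x).NeBot)
    (f : Λ → Λ) (Df : Λ → ℝ)
    (hcont : Continuous f) (hsurj : Function.Surjective f)
    (hconf : IsConfDeriv f Df)
    (hexp : UnifExpanding f Df)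
    (hopen : IsOpenMap f)
    (hfib : ∀ y : Λ, (f ⁻¹' {y}).Finite)
    (hmix : ∀ δ : ℝ, 0 < δ → ∃ n₀ : ℕ, ∀ x : Λ, f^[n₀] '' ball x δ = Set.univ)
    (β lam₀ lam₁ δf : ℝ)
    (hβ : 1 < β) (hDfβ : ∀ x : Λ, β ≤ Df x)
    (hlam₀ : 1 < lam₀) (hlam₀β : lam₀ < β) (hδf : 0 < δf)
    (hC2' : ∀ u v : Λ, u ≠ v → dist u v < δf →
      lam₀ ≤ dist (f u) (f v) / dist u v ∧ dist (f u) (f v) / dist u v ≤ lam₁)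
    (hC3' : ∀ x : Λ, ball (f x) δf ⊆ f '' ball x δf)
    -- the common finite pressure function and its unique zero `s_crit`
    (P : ℝ → ℝ)
    (hP : ∀ s : ℝ, 0 ≤ s →
      Filter.Tendsto (fun n : ℕ => (n : ℝ)⁻¹ * Real.log (mn f Df s n))
        Filter.atTop (𝓝 (P s)) ∧
      Filter.Tendsto (fun n : ℕ => (n : ℝ)⁻¹ * Real.log (Mn f Df s n))
        Filter.atTop (𝓝 (P s)))
    (scrit : ℝ) (hscrit₀ : 0 ≤ scrit) (hzero : P scrit = 0)
    (huniq : ∀ s : ℝ, 0 ≤ s → P s = 0 → s = scrit) :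
    (∀ s : ℝ, 0 ≤ s → s < scrit → ∃ c : ℝ, 0 < c ∧
      ∀ U : ℕ → Set Λ, (∀ i, IsOpen (U i)) → (∀ i, Metric.diam (U i) < δf) →
        (Set.univ : Set Λ) ⊆ ⋃ i, U i →
        ENNReal.ofReal c ≤ ∑' i, ENNReal.ofReal (Metric.diam (U i) ^ s)) ∧
    (∀ s : ℝ, 0 ≤ s → s < scrit → 0 < μH[s] (Set.univ : Set Λ)) ∧
    ENNReal.ofReal scrit ≤ dimH (Set.univ : Set Λ) := by
  have ht : 0 ≤ upperPressure f Df scrit :=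
    (upperPressure_eq_of_tendsto (hP scrit hscrit₀).2).trans (by simp [hzero]) |>.ge
  obtain ⟨hcover, hmeasure, hdim⟩ := hausdorff_lower_bound_general hpt hconf hexp ht
  refine ⟨fun s hs hsc => ?_, hmeasure, hdim⟩
  exact (hcover s hs hsc).imp fun c hc => ⟨hc.1, fun U hU _ => hc.2 U hU⟩

end
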